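/- Let p, q > 1, a ≥ 0 and b ≤ 0. Then arsinh_{p,q} is (a,b)-concave on (0,∞): for all r, s > 0, arsinh_{p,q}(M_a(r,s)) ≥ M_b(arsinh_{p,q}(r), arsinh_{p,q}(s)). -/

import Mathlib

open Real Set

/-- `arsinhPQ p q x = ∫₀ˣ (1 + tᵠ)^(-1/p) dt`, the generalized inverse hyperbolic sine. -/
noncomputable def arsinhPQ (p q x : ℝ) : ℝ := ∫ t in (0:ℝ)..x, (1 + t ^ q) ^ (-(1/p))

/-- The power mean `M_a(x,y)`: `((x^a + y^a)/2)^(1/a)` for `a ≠ 0` and `√(xy)` for `a = 0`. -/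
noncomputable def powerMean (a x y : ℝ) : ℝ :=
  if a = 0 then Real.sqrt (x * y) else ((x ^ a + y ^ a) / 2) ^ (1/a)

/-! The crux is that `F = arsinh_{p,q}` is geometrically concave: `F (k * x) / F x` is antitone in
`x` for every `k ≥ 1`. Substituting `t ↦ k * t` writes this ratio as a quotient of two integrals
over `(0, x)` of functions whose own quotient is antitone, because the integrand
`(1 + t ^ q) ^ (-(1 / p))` is geometrically concave; such a quotient of integrals is again antitone.
For the four points `r`, `√(r * s)`, `√(r * s)`, `s` this says `√(F r * F s) ≤ F √(r * s)`, the case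
`a = b = 0`, and the general case follows as `F` is increasing and power means increase with their
exponent. -/

open MeasureTheory

section PowerMean

variable {a b c x y : ℝ}

theorem powerMean_zero (x y : ℝ) : powerMean 0 x y = √(x * y) := if_pos rfl

theorem powerMean_of_ne_zero (ha : a ≠ 0) (x y : ℝ) :
    powerMean a x y = ((x ^ a + y ^ a) / 2) ^ (1 / a) := if_neg ha

theorem powerMean_pos (a : ℝ) (hx : 0 < x) (hy : 0 < y) : 0 < powerMean a x y := by
  unfold powerMean
  split_ifs <;> positivity

theorem powerMean_neg (a : ℝ) (hx : 0 < x) (hy : 0 < y) :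
    powerMean (-a) x y = (powerMean a x⁻¹ y⁻¹)⁻¹ := by
  rcases eq_or_ne a 0 with rfl | ha
  · rw [neg_zero, powerMean_zero, powerMean_zero, ← mul_inv, Real.sqrt_inv, inv_inv]
  · rw [powerMean_of_ne_zero (neg_ne_zero.2 ha), powerMean_of_ne_zero ha,
      one_div_neg_eq_neg_one_div, rpow_neg (by positivity), rpow_neg hx.le, rpow_neg hy.le,
      inv_rpow hx.le, inv_rpow hy.le]

theorem le_powerMean_iff_of_pos (hc : 0 ≤ c) (hx : 0 < x) (hy : 0 < y) (ha : 0 < a) :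
    c ≤ powerMean a x y ↔ c ^ a ≤ (x ^ a + y ^ a) / 2 := by
  rw [powerMean_of_ne_zero ha.ne', one_div, le_rpow_inv_iff_of_pos hc (by positivity) ha]

theorem powerMean_zero_le (ha : 0 ≤ a) (hx : 0 < x) (hy : 0 < y) :
    powerMean 0 x y ≤ powerMean a x y := by
  rcases ha.eq_or_lt with rfl | ha
  · rfl
  rw [le_powerMean_iff_of_pos (powerMean_pos 0 hx hy).le hx hy ha, powerMean_zero,
    sqrt_mul hx.le, mul_rpow (sqrt_nonneg x) (sqrt_nonneg y)]
  have sq_sqrt_rpow {z : ℝ} (hz : 0 < z) : (√z ^ a) ^ 2 = z ^ a := by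
    rw [rpow_pow_comm (sqrt_nonneg z), sq_sqrt hz.le]
  linarith [two_mul_le_add_sq (√x ^ a) (√y ^ a), sq_sqrt_rpow hx, sq_sqrt_rpow hy]

theorem powerMean_le_powerMean_of_nonneg (ha : 0 ≤ a) (hab : a ≤ b) (hx : 0 < x) (hy : 0 < y) :
    powerMean a x y ≤ powerMean b x y := by
  rcases ha.eq_or_lt with rfl | ha
  · exact powerMean_zero_le hab hx hy
  have jensen := (convexOn_rpow ((one_le_div ha).2 hab)).2 (rpow_nonneg hx.le a)
    (rpow_nonneg hy.le a) one_half_pos.le one_half_pos.le (add_halves 1)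
  rw [le_powerMean_iff_of_pos (powerMean_pos a hx hy).le hx hy (ha.trans_le hab)]
  calc powerMean a x y ^ b = ((x ^ a + y ^ a) / 2) ^ (b / a) := by
        rw [powerMean_of_ne_zero ha.ne', ← rpow_mul (by positivity), one_div_mul_eq_div]
    _ = (1 / 2 * x ^ a + 1 / 2 * y ^ a) ^ (b / a) := by ring_nf
    _ ≤ 1 / 2 * (x ^ a) ^ (b / a) + 1 / 2 * (y ^ a) ^ (b / a) := jensen
    _ = (x ^ b + y ^ b) / 2 := by
        rw [← rpow_mul hx.le, ← rpow_mul hy.le, mul_div_cancel₀ b ha.ne']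
        ring

theorem powerMean_monotone_exponent (hx : 0 < x) (hy : 0 < y) :
    Monotone fun a => powerMean a x y := by
  have of_nonpos {a b : ℝ} (hab : a ≤ b) (hb : b ≤ 0) : powerMean a x y ≤ powerMean b x y := by
    have reciprocal := powerMean_le_powerMean_of_nonneg (neg_nonneg.2 hb) (neg_le_neg hab)
      (inv_pos.2 hx) (inv_pos.2 hy)
    rw [← neg_neg a, ← neg_neg b, powerMean_neg _ hx hy, powerMean_neg _ hx hy]
    exact inv_anti₀ (powerMean_pos _ (inv_pos.2 hx) (inv_pos.2 hy)) reciprocal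
  intro a b hab
  rcases le_total 0 a with ha | ha
  · exact powerMean_le_powerMean_of_nonneg ha hab hx hy
  rcases le_total 0 b with hb | hb
  · exact (of_nonpos ha le_rfl).trans (powerMean_zero_le hb hx hy)
  · exact of_nonpos hab hb

end PowerMean

/-- `f` is `(a, b)`-concave on `I`: it maps the power mean of exponent `a` of two points of `I` to
at least the power mean of exponent `b` of their images. -/
def PowerMeanConcaveOn (a b : ℝ) (I : Set ℝ) (f : ℝ → ℝ) : Prop :=
  ∀ ⦃x⦄, x ∈ I → ∀ ⦃y⦄, y ∈ I → powerMean b (f x) (f y) ≤ f (powerMean a x y)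

theorem PowerMeanConcaveOn.mono {a a' b b' : ℝ} {f : ℝ → ℝ}
    (hf : PowerMeanConcaveOn a b (Ioi 0) f) (f_mono : MonotoneOn f (Ioi 0))
    (f_pos : ∀ x > 0, 0 < f x) (ha : a ≤ a') (hb : b' ≤ b) :
    PowerMeanConcaveOn a' b' (Ioi 0) f := fun x hx y hy =>
  calc powerMean b' (f x) (f y)
      ≤ powerMean b (f x) (f y) := powerMean_monotone_exponent (f_pos x hx) (f_pos y hy) hb
    _ ≤ f (powerMean a x y) := hf hx hy
    _ ≤ f (powerMean a' x y) :=
      f_mono (powerMean_pos a hx hy) (powerMean_pos a' hx hy) (powerMean_monotone_exponent hx hy ha)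

/-- Geometric (or multiplicative) concavity on `(0, ∞)`, i.e. concavity of `u ↦ log (f (exp u))`
when `f` is positive. It is encoded as antitonicity of the ratios `f (k * x) / f x` for `1 ≤ k`,
cleared of denominators, which requires no regularity of `f` and passes directly to integrals. -/
def GeometricallyConcave (f : ℝ → ℝ) : Prop :=
  ∀ ⦃k x y : ℝ⦄, 1 ≤ k → 0 < x → x ≤ y → f (k * y) * f x ≤ f (k * x) * f y

theorem GeometricallyConcave.powerMeanConcaveOn {f : ℝ → ℝ} (hf : GeometricallyConcave f)
    (f_nonneg : ∀ x > 0, 0 ≤ f x) : PowerMeanConcaveOn 0 0 (Ioi 0) f := by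
  intro r hr s hs
  wlog hrs : r ≤ s generalizing r s
  · simpa only [powerMean_zero, mul_comm] using this hs hr (le_of_not_ge hrs)
  rw [mem_Ioi] at hr hs
  have hm : r ≤ √(r * s) := le_sqrt_of_sq_le (by nlinarith)
  have scale_left : √(r * s) / r * r = √(r * s) := div_mul_cancel₀ _ hr.ne'
  have scale_mean : √(r * s) / r * √(r * s) = s := by
    rw [div_mul_eq_mul_div, mul_self_sqrt (by positivity), mul_div_cancel_left₀ s hr.ne']
  have four_points := hf ((one_le_div hr).2 hm) hr hm
  rw [scale_left, scale_mean, mul_comm, ← sq] at four_points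
  rw [powerMean_zero, powerMean_zero]
  exact sqrt_le_iff.2 ⟨f_nonneg _ (hr.trans_le hm), four_points⟩

theorem integral_mul_integral_le_of_ratio_antitone {f g : ℝ → ℝ} {u v w : ℝ} (huv : u ≤ v)
    (hvw : v ≤ w) (hf : IntervalIntegrable f volume u w) (hg : IntervalIntegrable g volume u w)
    (h : ∀ ⦃s⦄, u < s → ∀ ⦃t⦄, s ≤ t → t < w → f t * g s ≤ f s * g t) :
    (∫ t in u..w, f t) * ∫ t in u..v, g t ≤ (∫ t in u..v, f t) * ∫ t in u..w, g t := by
  have left_subset : uIcc u v ⊆ uIcc u w := uIcc_subset_uIcc_left (mem_uIcc_of_le huv hvw)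
  have right_subset : uIcc v w ⊆ uIcc u w := uIcc_subset_uIcc_right (mem_uIcc_of_le huv hvw)
  have hfl := hf.mono_set left_subset
  have hfr := hf.mono_set right_subset
  have hgl := hg.mono_set left_subset
  have hgr := hg.mono_set right_subset
  have pointwise (t : ℝ) (ht : t ∈ Ioo v w) :
      f t * ∫ s in u..v, g s ≤ (∫ s in u..v, f s) * g t := by
    rw [← intervalIntegral.integral_const_mul, ← intervalIntegral.integral_mul_const]
    exact intervalIntegral.integral_mono_on_of_le_Ioo huv (hgl.const_mul _) (hfl.mul_const _)
      fun s hs => h hs.1 (hs.2.trans ht.1).le ht.2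
  have off_diagonal :
      (∫ t in v..w, f t) * ∫ s in u..v, g s ≤ (∫ s in u..v, f s) * ∫ t in v..w, g t := by
    rw [← intervalIntegral.integral_mul_const, ← intervalIntegral.integral_const_mul]
    exact intervalIntegral.integral_mono_on_of_le_Ioo hvw (hfr.mul_const _) (hgr.const_mul _)
      pointwise
  rw [← intervalIntegral.integral_add_adjacent_intervals hfl hfr,
    ← intervalIntegral.integral_add_adjacent_intervals hgl hgr, add_mul, mul_add]
  gcongr

theorem GeometricallyConcave.intervalIntegral {f : ℝ → ℝ} (hf : GeometricallyConcave f)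
    (hint : ∀ x > 0, IntervalIntegrable f volume 0 x) :
    GeometricallyConcave fun x => ∫ t in 0..x, f t := by
  intro k x y hk hx hxy
  have hk0 : 0 < k := one_pos.trans_le hk
  have hy : 0 < y := hx.trans_le hxy
  have rescale (z : ℝ) : ∫ t in 0..k * z, f t = k * ∫ t in 0..z, f (k * t) := by
    rw [intervalIntegral.mul_integral_comp_mul_left, mul_zero]
  have hint_scaled : IntervalIntegrable (fun t => f (k * t)) volume 0 y := by
    simpa only [zero_div, mul_div_cancel_left₀ y hk0.ne'] using
      (hint (k * y) (mul_pos hk0 hy)).comp_mul_left (c := k)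
  simp only [rescale, mul_assoc]
  gcongr k * ?_
  exact integral_mul_integral_le_of_ratio_antitone hx.le hxy hint_scaled (hint y hy)
    fun s hs t hst _ => hf hk hs hst

theorem one_add_rpow_mul_le (q : ℝ) {k x y : ℝ} (hk : 1 ≤ k) (hx : 0 < x) (hxy : x ≤ y) :
    (1 + (k * x) ^ q) * (1 + y ^ q) ≤ (1 + (k * y) ^ q) * (1 + x ^ q) := by
  have hy : 0 < y := hx.trans_le hxy
  have same_sign : 0 ≤ (k ^ q - 1) * (y ^ q - x ^ q) := by
    rcases le_total 0 q with hq | hq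
    · exact mul_nonneg (sub_nonneg.2 (one_le_rpow hk hq))
        (sub_nonneg.2 (rpow_le_rpow hx.le hxy hq))
    · exact mul_nonneg_of_nonpos_of_nonpos
        (sub_nonpos.2 (rpow_le_one_of_one_le_of_nonpos hk hq))
        (sub_nonpos.2 (rpow_le_rpow_of_nonpos hx hxy hq))
  rw [mul_rpow (by positivity) hx.le, mul_rpow (by positivity) hy.le]
  linarith

theorem geometricallyConcave_one_add_rpow_rpow (q : ℝ) {c : ℝ} (hc : c ≤ 0) :
    GeometricallyConcave fun t => (1 + t ^ q) ^ c := by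
  intro k x y hk hx hxy
  have hy : 0 < y := hx.trans_le hxy
  beta_reduce
  rw [← mul_rpow (by positivity) (by positivity), ← mul_rpow (by positivity) (by positivity)]
  exact rpow_le_rpow_of_nonpos (by positivity) (one_add_rpow_mul_le q hk hx hxy) hc

theorem intervalIntegrable_one_add_rpow_rpow (q : ℝ) {c x y : ℝ} (hc : c ≤ 0) (hx : 0 ≤ x)
    (hy : 0 ≤ y) : IntervalIntegrable (fun t : ℝ => (1 + t ^ q) ^ c) volume x y := by
  have measurable_integrand : Measurable fun t : ℝ => (1 + t ^ q) ^ c := by fun_prop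
  refine (intervalIntegrable_const (c := (1 : ℝ))).mono_fun'
    measurable_integrand.aestronglyMeasurable
    (ae_restrict_of_forall_mem measurableSet_uIoc fun t ht => ?_)
  have ht0 : 0 ≤ t := (le_min hx hy).trans ht.1.le
  have htq : 0 ≤ t ^ q := rpow_nonneg ht0 q
  beta_reduce
  rw [Real.norm_of_nonneg (by positivity)]
  exact rpow_le_one_of_one_le_of_nonpos (le_add_of_nonneg_right htq) hc

section ArsinhPQ

variable {p : ℝ} (q : ℝ)

theorem arsinhPQ_pos {x : ℝ} (hp : 0 < p) (hx : 0 < x) : 0 < arsinhPQ p q x :=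
  intervalIntegral.intervalIntegral_pos_of_pos_on
    (intervalIntegrable_one_add_rpow_rpow q (by simp [hp.le]) le_rfl hx.le)
    (fun t ht => by have := ht.1; positivity) hx

theorem monotoneOn_arsinhPQ (hp : 0 < p) : MonotoneOn (arsinhPQ p q) (Ici 0) := by
  intro x hx y hy hxy
  refine intervalIntegral.integral_mono_interval le_rfl hx hxy ?_
    (intervalIntegrable_one_add_rpow_rpow q (by simp [hp.le]) le_rfl hy)
  refine ae_restrict_of_forall_mem measurableSet_Ioc fun t ht => ?_
  have := ht.1
  simp only [Pi.zero_apply]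
  positivity

theorem geometricallyConcave_arsinhPQ (hp : 0 < p) : GeometricallyConcave (arsinhPQ p q) := by
  have hc : -(1 / p) ≤ 0 := by simp [hp.le]
  exact (geometricallyConcave_one_add_rpow_rpow q hc).intervalIntegral fun x hx =>
    intervalIntegrable_one_add_rpow_rpow q hc le_rfl hx.le

theorem arsinhPQ_ab_concave_nonneg_nonpos_general {a b : ℝ} (hp : 0 < p) (ha : 0 ≤ a)
    (hb : b ≤ 0) :
    PowerMeanConcaveOn a b (Ioi 0) (arsinhPQ p q) :=
  have pos : ∀ x > 0, 0 < arsinhPQ p q x := fun _ hx => arsinhPQ_pos q hp hx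
  have geometric_case : PowerMeanConcaveOn 0 0 (Ioi 0) (arsinhPQ p q) :=
    (geometricallyConcave_arsinhPQ q hp).powerMeanConcaveOn fun x hx => (pos x hx).le
  geometric_case.mono ((monotoneOn_arsinhPQ q hp).mono Ioi_subset_Ici_self) pos ha hb

end ArsinhPQ

theorem arsinhPQ_ab_concave_nonneg_nonpos (p q a b : ℝ) (hp : 1 < p) (hq : 1 < q)
    (ha : 0 ≤ a) (hb : b ≤ 0)
    (r s : ℝ) (hr : 0 < r) (hs : 0 < s) :
    arsinhPQ p q (powerMean a r s) ≥
      powerMean b (arsinhPQ p q r) (arsinhPQ p q s) :=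
  arsinhPQ_ab_concave_nonneg_nonpos_general q (one_pos.trans hp) ha hb hr hs
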